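/- Let q, q¹, …, qᵐ be probability measures on a measurable space X and b ∈ ℝᵐ, and assume the Slater condition: there exist a probability measure p̂ and ζ > 0 with KL(qⁱ‖p̂) ≤ bᵢ − ζ for all i. Let λ* ∈ ℝ₊ᵐ be a maximizer of the dual function g(λ) = inf_p [KL(q‖p) + Σᵢ λᵢ (KL(qⁱ‖p) − bᵢ)]. Then the set of optimal solutions of the constrained problem minimize KL(q‖p) subject to KL(qⁱ‖p) ≤ bᵢ for all i (over all probability measures p on X) coincides with the set of minimizers over all probability measures p of p ↦ KL(q_mix^{(λ*)}‖p), where q_mix^{(λ*)} = (q + Σᵢ λ*ᵢ qⁱ)/(1 + Σᵢ λ*ᵢ). -/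

import Mathlib

open MeasureTheory

/-- The Kullback–Leibler divergence `KL(μ‖ν)`, with values in `EReal`. -/
noncomputable def KL {X : Type*} [MeasurableSpace X] (μ ν : Measure X) : EReal :=
  open Classical in
  if μ ≪ ν ∧ Integrable (llr μ ν) μ then ((∫ x, llr μ ν x ∂μ : ℝ) : EReal) else ⊤

/-- The dual function `g(λ) = inf over probability measures p of
`KL(q‖p) + ∑ i, λ i * (KL(qⁱ‖p) − b i)`. -/
noncomputable def dualFn {X : Type*} [MeasurableSpace X] {m : ℕ}
    (q : Measure X) (qi : Fin m → Measure X) (b : Fin m → ℝ) (l : Fin m → ℝ) : EReal :=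
  ⨅ p : {p : Measure X // IsProbabilityMeasure p},
    KL q p.1 + ∑ i, (l i : EReal) * (KL (qi i) p.1 - (b i : EReal))

/-- The mixture distribution `q_mix^{(λ)} = (q + ∑ i, λ i • qⁱ) / (1 + ∑ i, λ i)`. -/
noncomputable def qMix {X : Type*} [MeasurableSpace X] {m : ℕ}
    (q : Measure X) (qi : Fin m → Measure X) (l : Fin m → ℝ) : Measure X :=
  (ENNReal.ofReal (1 + ∑ i, l i))⁻¹ • (q + ∑ i, ENNReal.ofReal (l i) • qi i)

/-! With weights `w = (1, λ)` and `W = ∑ i, w i`, the compensation identity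
`∑ i, w i * KL(μ i‖p) = W * KL(M‖p) + JS(w)`, where `M` is the mixture of the `μ i`, shows that the
Lagrangian is minimised by `M = q_mix^{(λ)}` alone and that `g(λ) = JS(w) - ∑ i, λ i * b i`.
If `λ` maximises `g`, then increasing a single weight and letting the increment tend to zero yields,
by lower semicontinuity of `KL`, that `KL(qⁱ‖M) ≤ b i` (weight of `qⁱ`) and that `KL(q‖M) ≤ g(λ)`
(weight of `q`, since `JS` is homogeneous). Hence every feasible `p` satisfies
`KL(q‖M) + W * KL(M‖p) ≤ KL(q‖p)`, so `M`, which is feasible, is the only solution. -/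

open Filter InformationTheory Matrix Topology
open scoped ENNReal NNReal

/-- The perspective `y * klFun (x / y) = x * log (x / y) + y - x` of `klFun`: the integrand of the
Kullback–Leibler divergence between two measures with densities `x` and `y` with respect to an
arbitrary reference measure. The value at `y = 0 < x` is set to `∞`, since there `x / y = 0`. -/
noncomputable def klPersp (x y : ℝ≥0) : ℝ≥0∞ :=
  if y = 0 ∧ x ≠ 0 then ∞ else y * ENNReal.ofReal (klFun (x / y))

section klPersp

variable {x y : ℝ≥0}

lemma klPersp_zero_right (hx : x ≠ 0) : klPersp x 0 = ∞ :=
  if_pos ⟨rfl, hx⟩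

lemma klPersp_eq_mul_klFun (h : y = 0 → x = 0) :
    klPersp x y = y * ENNReal.ofReal (klFun (x / y)) :=
  if_neg fun hxy ↦ hxy.2 (h hxy.1)

lemma coe_mul_klFun_div (h : y = 0 → x = 0) :
    (y * klFun (x / y) : ℝ) = x * Real.log (x / y) + y - x := by
  rcases eq_or_ne y 0 with rfl | hy
  · simp [h rfl]
  · have : (y : ℝ) ≠ 0 := by exact_mod_cast hy
    rw [klFun_apply]
    field_simp

lemma klPersp_eq_ofReal (h : y = 0 → x = 0) :
    klPersp x y = ENNReal.ofReal (x * Real.log (x / y) + y - x) := by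
  rw [klPersp_eq_mul_klFun h, ← coe_mul_klFun_div h, ENNReal.ofReal_mul y.coe_nonneg,
    ENNReal.ofReal_coe_nnreal]

lemma mul_log_div_add_sub_nonneg (h : y = 0 → x = 0) :
    0 ≤ (x * Real.log (x / y) + y - x : ℝ) := by
  rw [← coe_mul_klFun_div h]
  exact mul_nonneg y.coe_nonneg (klFun_nonneg (by positivity))

lemma klPersp_self (x : ℝ≥0) : klPersp x x = 0 := by
  rcases eq_or_ne x 0 with rfl | hx <;> simp [klPersp_eq_ofReal, *]

@[fun_prop]
lemma measurable_klPersp {X : Type*} [MeasurableSpace X] {f g : X → ℝ≥0} (hf : Measurable f)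
    (hg : Measurable g) : Measurable fun x ↦ klPersp (f x) (g x) :=
  Measurable.ite ((hg (measurableSet_singleton 0)).inter (hf (measurableSet_singleton 0)).compl)
    measurable_const (by fun_prop)

lemma continuousAt_klPersp_right (hy : y ≠ 0) : ContinuousAt (klPersp x) y := by
  have heq : (fun z : ℝ≥0 ↦ ENNReal.ofReal (z * klFun (x / z))) =ᶠ[𝓝 y] klPersp x := by
    filter_upwards [isOpen_ne.mem_nhds hy] with z hz
    rw [klPersp_eq_mul_klFun fun h ↦ absurd h hz, ENNReal.ofReal_mul z.coe_nonneg,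
      ENNReal.ofReal_coe_nnreal]
  have hdiv : ContinuousAt (fun z : ℝ≥0 ↦ (x / z : ℝ)) y :=
    continuousAt_const.div NNReal.continuous_coe.continuousAt (by exact_mod_cast hy)
  exact (ENNReal.continuous_ofReal.continuousAt.comp
    (NNReal.continuous_coe.continuousAt.mul
      (continuous_klFun.continuousAt.comp hdiv))).congr heq

lemma tendsto_klPersp_nhds_zero (hx : x ≠ 0) : Tendsto (klPersp x) (𝓝 0) (𝓝 ∞) := by
  have hx' : (0 : ℝ) < x := by exact_mod_cast pos_iff_ne_zero.2 hx
  rw [← nhdsNE_sup_pure, tendsto_sup, tendsto_pure_left, klPersp_zero_right hx]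
  refine ⟨?_, fun s hs ↦ mem_of_mem_nhds hs⟩
  have hcoe : Tendsto (fun y : ℝ≥0 ↦ (y : ℝ)) (𝓝[≠] 0) (𝓝[≠] 0) :=
    tendsto_nhdsWithin_iff.2 ⟨(NNReal.continuous_coe.tendsto' 0 0 rfl).mono_left nhdsWithin_le_nhds,
      by filter_upwards [self_mem_nhdsWithin] with y hy using by simpa using hy⟩
  have hlog : Tendsto (fun y : ℝ≥0 ↦ x * (Real.log x - Real.log y) + (y - x)) (𝓝[≠] 0) atTop := by
    refine tendsto_atTop_add_right_of_le _ (-(x : ℝ)) (Tendsto.const_mul_atTop hx' ?_)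
      (fun y ↦ by simp)
    exact tendsto_atTop_add_const_left _ _
      (tendsto_neg_atBot_atTop.comp (Real.tendsto_log_nhdsNE_zero.comp hcoe))
  refine (ENNReal.tendsto_ofReal_nhds_top.2 hlog).congr' ?_
  filter_upwards [self_mem_nhdsWithin] with y (hy : y ≠ 0)
  rw [klPersp_eq_ofReal fun h ↦ absurd h hy, Real.log_div hx'.ne' (by exact_mod_cast hy),
    add_sub_assoc]

lemma lowerSemicontinuous_klPersp_right (x : ℝ≥0) : LowerSemicontinuous (klPersp x) := by
  intro y
  rcases eq_or_ne y 0 with rfl | hy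
  · rcases eq_or_ne x 0 with rfl | hx
    · intro c hc
      simp [klPersp_self] at hc
    · refine ContinuousAt.lowerSemicontinuousAt ?_
      rw [ContinuousAt, klPersp_zero_right hx]
      exact tendsto_klPersp_nhds_zero hx
  · exact (continuousAt_klPersp_right hy).lowerSemicontinuousAt

lemma coe_mul_klPersp {w : ℝ≥0} (h : w ≠ 0 → y = 0 → x = 0) :
    w * klPersp x y = ENNReal.ofReal (w * (x * Real.log (x / y) + y - x)) := by
  rcases eq_or_ne w 0 with rfl | hw
  · simp
  · rw [klPersp_eq_ofReal (h hw), ENNReal.ofReal_mul w.coe_nonneg, ENNReal.ofReal_coe_nnreal]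

lemma mul_mul_log_div_add_sub_nonneg {w : ℝ≥0} (h : w ≠ 0 → y = 0 → x = 0) :
    0 ≤ (w * (x * Real.log (x / y) + y - x) : ℝ) := by
  rcases eq_or_ne w 0 with rfl | hw
  · simp
  · exact mul_nonneg w.coe_nonneg (mul_log_div_add_sub_nonneg (h hw))

lemma mul_log_div_add_sub_eq_add {z : ℝ≥0} (hz : z = 0 → x = 0) (hy : y = 0 → z = 0) :
    (x * Real.log (x / y) + y - x : ℝ) =
      x * Real.log (x / z) + z - x + (x * Real.log (z / y) + y - z) := by
  rcases eq_or_ne x 0 with rfl | hx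
  · simp
  have hx₀ : (x : ℝ) ≠ 0 := by exact_mod_cast hx
  have hz₀ : (z : ℝ) ≠ 0 := by exact_mod_cast mt hz hx
  have hy₀ : (y : ℝ) ≠ 0 := by exact_mod_cast mt hy (mt hz hx)
  rw [Real.log_div hx₀ hy₀, Real.log_div hx₀ hz₀, Real.log_div hz₀ hy₀]
  ring

variable {ι : Type*} [Fintype ι]

lemma sum_mul_mul_log_div_add_sub (w x : ι → ℝ≥0) {z : ℝ≥0} (hz : ∑ i, w i * x i = (∑ i, w i) * z)
    (hxz : ∀ i, w i ≠ 0 → z = 0 → x i = 0) (hzy : y = 0 → z = 0) :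
    ∑ i, (w i * (x i * Real.log (x i / y) + y - x i) : ℝ) =
      (∑ i, w i : ℝ≥0) * (z * Real.log (z / y) + y - z) +
        ∑ i, (w i * (x i * Real.log (x i / z) + z - x i) : ℝ) := by
  have hz' : ∑ i, (w i * x i : ℝ) = (∑ i, (w i : ℝ)) * z := by exact_mod_cast hz
  calc ∑ i, (w i * (x i * Real.log (x i / y) + y - x i) : ℝ)
    _ = ∑ i, ((w i * x i : ℝ) * Real.log (z / y) + w i * (y - z : ℝ) +
          w i * (x i * Real.log (x i / z) + z - x i)) := by
        refine Finset.sum_congr rfl fun i _ ↦ ?_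
        rcases eq_or_ne (w i) 0 with hw | hw
        · simp [hw]
        · rw [mul_log_div_add_sub_eq_add (hxz i hw) hzy]
          ring
    _ = _ := by
        rw [Finset.sum_add_distrib, Finset.sum_add_distrib, ← Finset.sum_mul, ← Finset.sum_mul, hz',
          NNReal.coe_sum]
        ring

lemma sum_mul_klPersp (w x : ι → ℝ≥0) (y : ℝ≥0) :
    ∑ i, w i * klPersp (x i) y =
      (∑ i, w i : ℝ≥0) * klPersp ((∑ i, w i)⁻¹ * ∑ i, w i * x i) y +
        ∑ i, w i * klPersp (x i) ((∑ i, w i)⁻¹ * ∑ i, w i * x i) := by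
  rcases eq_or_ne (∑ i, w i) 0 with hW | hW
  · have hw : ∀ i, w i = 0 := by simpa using hW
    simp [hw]
  set z := (∑ i, w i)⁻¹ * ∑ i, w i * x i
  have hz : ∑ i, w i * x i = (∑ i, w i) * z := (mul_inv_cancel_left₀ hW _).symm
  have hxz : ∀ i, w i ≠ 0 → z = 0 → x i = 0 := fun i hwi hz₀ ↦ by
    have := (Finset.sum_eq_zero_iff.1 (hz.trans (by simp [hz₀]))) i (Finset.mem_univ i)
    exact (mul_eq_zero.1 this).resolve_left hwi
  by_cases hzy : y = 0 → z = 0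
  · have hxy : ∀ i, w i ≠ 0 → y = 0 → x i = 0 := fun i hwi hy ↦ hxz i hwi (hzy hy)
    rw [coe_mul_klPersp fun _ ↦ hzy, Finset.sum_congr rfl fun i _ ↦ coe_mul_klPersp (hxy i),
      Finset.sum_congr rfl fun i _ ↦ coe_mul_klPersp (hxz i),
      ← ENNReal.ofReal_sum_of_nonneg fun i _ ↦ mul_mul_log_div_add_sub_nonneg (hxy i),
      ← ENNReal.ofReal_sum_of_nonneg fun i _ ↦ mul_mul_log_div_add_sub_nonneg (hxz i),
      ← ENNReal.ofReal_add (mul_mul_log_div_add_sub_nonneg fun _ ↦ hzy)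
        (Finset.sum_nonneg fun i _ ↦ mul_mul_log_div_add_sub_nonneg (hxz i)),
      sum_mul_mul_log_div_add_sub w x hz hxz hzy]
  · obtain ⟨rfl, hz₀⟩ := Classical.not_imp.1 hzy
    obtain ⟨i, -, hi⟩ := Finset.exists_ne_zero_of_sum_ne_zero (hz ▸ mul_ne_zero hW hz₀)
    obtain ⟨hwi, hxi⟩ := mul_ne_zero_iff.1 hi
    have htop : w i * klPersp (x i) 0 = ∞ := by
      rw [klPersp_zero_right hxi, ENNReal.mul_top (by exact_mod_cast hwi)]
    rw [ENNReal.sum_eq_top.2 ⟨i, Finset.mem_univ i, htop⟩, klPersp_zero_right hz₀,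
      ENNReal.mul_top (by exact_mod_cast hW), top_add]

end klPersp

section withDensity

variable {X : Type*} [MeasurableSpace X] {ρ : Measure X} {f g : X → ℝ≥0}

lemma withDensity_withDensity_div (hf : Measurable f) (hg : Measurable g)
    (h : ∀ᵐ x ∂ρ, g x = 0 → f x = 0) :
    (ρ.withDensity fun x ↦ (g x : ℝ≥0∞)).withDensity (fun x ↦ ((f x / g x : ℝ≥0) : ℝ≥0∞)) =
      ρ.withDensity fun x ↦ (f x : ℝ≥0∞) := by
  rw [← withDensity_mul _ (by fun_prop) (by fun_prop)]
  refine withDensity_congr_ae ?_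
  filter_upwards [h] with x hx
  rw [Pi.mul_apply, ← ENNReal.coe_mul, mul_comm, div_mul_cancel_of_imp hx]

lemma withDensity_absolutelyContinuous_withDensity_iff (hf : Measurable f) (hg : Measurable g) :
    ρ.withDensity (fun x ↦ (f x : ℝ≥0∞)) ≪ ρ.withDensity (fun x ↦ (g x : ℝ≥0∞)) ↔
      ∀ᵐ x ∂ρ, g x = 0 → f x = 0 := by
  refine ⟨fun h ↦ ?_, fun h ↦ ?_⟩
  · have hnull : ρ.withDensity (fun x ↦ (f x : ℝ≥0∞)) {x | g x = 0} = 0 :=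
      h ((withDensity_apply_eq_zero (by fun_prop)).2 (by
        convert measure_empty (μ := ρ); ext; simp))
    rw [withDensity_apply_eq_zero (by fun_prop)] at hnull
    filter_upwards [measure_eq_zero_iff_ae_notMem.1 hnull] with x hx hgx
    by_contra hfx
    exact hx ⟨by simpa using hfx, hgx⟩
  · rw [← withDensity_withDensity_div hf hg h]
    exact withDensity_absolutelyContinuous _ _

lemma lintegral_klPersp_eq_top (hf : Measurable f) (hg : Measurable g)
    (h : ¬ ∀ᵐ x ∂ρ, g x = 0 → f x = 0) : ∫⁻ x, klPersp (f x) (g x) ∂ρ = ∞ := by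
  refine lintegral_eq_top_of_measure_eq_top_ne_zero (by fun_prop) fun hnull ↦ h ?_
  filter_upwards [measure_eq_zero_iff_ae_notMem.1 hnull] with x hx hgx
  by_contra hfx
  exact hx (by simp only [hgx, klPersp_zero_right hfx])

lemma klDiv_withDensity (hf : Measurable f) (hg : Measurable g)
    [IsFiniteMeasure (ρ.withDensity fun x ↦ (f x : ℝ≥0∞))]
    [IsFiniteMeasure (ρ.withDensity fun x ↦ (g x : ℝ≥0∞))] :
    klDiv (ρ.withDensity fun x ↦ (f x : ℝ≥0∞)) (ρ.withDensity fun x ↦ (g x : ℝ≥0∞)) =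
      ∫⁻ x, klPersp (f x) (g x) ∂ρ := by
  by_cases h : ∀ᵐ x ∂ρ, g x = 0 → f x = 0
  swap
  · rw [lintegral_klPersp_eq_top hf hg h,
      klDiv_of_not_ac (mt (withDensity_absolutelyContinuous_withDensity_iff hf hg).1 h)]
  set ν := ρ.withDensity fun x ↦ (g x : ℝ≥0∞)
  have hrnDeriv : (ρ.withDensity fun x ↦ (f x : ℝ≥0∞)).rnDeriv ν =ᵐ[ν]
      fun x ↦ ((f x / g x : ℝ≥0) : ℝ≥0∞) := by
    rw [← withDensity_withDensity_div hf hg h]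
    exact Measure.rnDeriv_withDensity ν (by fun_prop)
  calc klDiv (ρ.withDensity fun x ↦ (f x : ℝ≥0∞)) ν
    _ = ∫⁻ x, ENNReal.ofReal (klFun (f x / g x)) ∂ν := by
        rw [klDiv_eq_lintegral_klFun_of_ac
          ((withDensity_absolutelyContinuous_withDensity_iff hf hg).2 h)]
        refine lintegral_congr_ae ?_
        filter_upwards [hrnDeriv] with x hx
        rw [hx, ENNReal.coe_toReal, NNReal.coe_div]
    _ = ∫⁻ x, g x * ENNReal.ofReal (klFun (f x / g x)) ∂ρ :=
        lintegral_withDensity_eq_lintegral_mul _ (by fun_prop) (by fun_prop)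
    _ = ∫⁻ x, klPersp (f x) (g x) ∂ρ := by
        refine lintegral_congr_ae ?_
        filter_upwards [h] with x hx
        rw [klPersp_eq_mul_klFun hx]

lemma exists_eq_withDensity_of_ac {μ : Measure X} [SigmaFinite ρ] [IsFiniteMeasure μ] (h : μ ≪ ρ) :
    ∃ f : X → ℝ≥0, Measurable f ∧ μ = ρ.withDensity fun x ↦ (f x : ℝ≥0∞) := by
  refine ⟨fun x ↦ (μ.rnDeriv ρ x).toNNReal, by fun_prop, ?_⟩
  conv_lhs => rw [← Measure.withDensity_rnDeriv_eq μ ρ h]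
  refine withDensity_congr_ae ?_
  filter_upwards [μ.rnDeriv_ne_top ρ] with x hx using (ENNReal.coe_toNNReal hx).symm

lemma exists_common_withDensity {ι : Type*} [Finite ι] (ν : Measure X) [IsFiniteMeasure ν]
    (μ : ι → Measure X) [∀ i, IsFiniteMeasure (μ i)] :
    ∃ (ρ : Measure X) (g : X → ℝ≥0) (f : ι → X → ℝ≥0), Measurable g ∧ (∀ i, Measurable (f i)) ∧
      ν = ρ.withDensity (fun x ↦ (g x : ℝ≥0∞)) ∧
      μ = fun i ↦ ρ.withDensity fun x ↦ (f i x : ℝ≥0∞) := by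
  have := Fintype.ofFinite ι
  have hν : ν ≪ ν + ∑ j, μ j := Measure.absolutelyContinuous_of_le (Measure.le_add_right le_rfl)
  have hμ i : μ i ≪ ν + ∑ j, μ j := Measure.absolutelyContinuous_of_le <|
    Measure.le_add_left (Finset.single_le_sum (fun _ _ ↦ Measure.zero_le _) (Finset.mem_univ i))
  obtain ⟨g, hg, hνg⟩ := exists_eq_withDensity_of_ac hν
  choose f hf hμf using fun i ↦ exists_eq_withDensity_of_ac (hμ i)
  exact ⟨_, g, f, hg, hf, hνg, funext hμf⟩

end withDensity

section mixture

variable {X ι : Type*} [MeasurableSpace X] [Fintype ι]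

/-- The mixture of the measures `μ i` with weights `w i`, which need not be normalised. It is the
zero measure when all weights vanish. -/
noncomputable def mixture (w : ι → ℝ≥0) (μ : ι → Measure X) : Measure X :=
  (∑ i, w i)⁻¹ • ∑ i, w i • μ i

/-- The generalised Jensen–Shannon divergence of the measures `μ i`, for weights `w i` that need not
be normalised; it is homogeneous of degree one in `w`. -/
noncomputable def jsDiv (w : ι → ℝ≥0) (μ : ι → Measure X) : ℝ≥0∞ :=
  ∑ i, w i * klDiv (μ i) (mixture w μ)

variable {w : ι → ℝ≥0} {μ : ι → Measure X}

instance isFiniteMeasure_mixture [∀ i, IsFiniteMeasure (μ i)] : IsFiniteMeasure (mixture w μ) := by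
  unfold mixture
  infer_instance

lemma isProbabilityMeasure_mixture [∀ i, IsProbabilityMeasure (μ i)] (hw : ∑ i, w i ≠ 0) :
    IsProbabilityMeasure (mixture w μ) where
  measure_univ := by
    simp only [mixture, Measure.smul_apply, Measure.finsetSum_apply, measure_univ,
      ENNReal.smul_def, smul_eq_mul, mul_one]
    rw [← ENNReal.ofNNReal_finsetSum, ← ENNReal.coe_mul, inv_mul_cancel₀ hw, ENNReal.coe_one]

lemma mixture_smul {c : ℝ≥0} (hc : c ≠ 0) (w : ι → ℝ≥0) (μ : ι → Measure X) :
    mixture (c • w) μ = mixture w μ := by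
  simp only [mixture, Pi.smul_apply, smul_eq_mul, mul_smul, ← Finset.smul_sum, ← Finset.mul_sum,
    mul_inv]
  rw [smul_comm, smul_smul, smul_smul, inv_mul_cancel_right₀ hc]

lemma jsDiv_smul {c : ℝ≥0} (hc : c ≠ 0) (w : ι → ℝ≥0) (μ : ι → Measure X) :
    jsDiv (c • w) μ = c * jsDiv w μ := by
  simp only [jsDiv, mixture_smul hc, Finset.mul_sum, Pi.smul_apply, smul_eq_mul, ENNReal.coe_mul,
    mul_assoc]

lemma mixture_withDensity (w : ι → ℝ≥0) {ρ : Measure X} {f : ι → X → ℝ≥0}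
    (hf : ∀ i, Measurable (f i)) :
    mixture w (fun i ↦ ρ.withDensity fun x ↦ (f i x : ℝ≥0∞)) =
      ρ.withDensity fun x ↦ (((∑ i, w i)⁻¹ * ∑ i, w i * f i x : ℝ≥0) : ℝ≥0∞) := by
  ext s hs
  simp only [mixture, Measure.smul_apply, Measure.finsetSum_apply, withDensity_apply _ hs,
    ENNReal.smul_def, smul_eq_mul, ENNReal.coe_mul, ENNReal.ofNNReal_finsetSum]
  rw [lintegral_const_mul _ (by fun_prop), lintegral_finsetSum _ (by fun_prop)]
  simp only [lintegral_const_mul _ (hf _).coe_nnreal_ennreal]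

lemma sum_mul_klDiv (w : ι → ℝ≥0) (μ : ι → Measure X) [∀ i, IsFiniteMeasure (μ i)]
    (p : Measure X) [IsFiniteMeasure p] :
    ∑ i, w i * klDiv (μ i) p = (∑ i, w i : ℝ≥0) * klDiv (mixture w μ) p + jsDiv w μ := by
  have hmix : IsFiniteMeasure (mixture w μ) := inferInstance
  obtain ⟨ρ, g, f, hg, hf, rfl, rfl⟩ := exists_common_withDensity p μ
  rw [jsDiv]
  rw [mixture_withDensity w hf] at hmix ⊢
  have hz : Measurable fun x ↦ (∑ i, w i)⁻¹ * ∑ i, w i * f i x := by fun_prop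
  have hsum {u : ι → X → ℝ≥0∞} (hu : ∀ i, Measurable (u i)) :
      ∑ i, w i * ∫⁻ x, u i x ∂ρ = ∫⁻ x, ∑ i, w i * u i x ∂ρ := by
    rw [lintegral_finsetSum _ (by fun_prop)]
    simp only [lintegral_const_mul _ (hu _)]
  simp only [klDiv_withDensity, hf, hg, hz]
  rw [hsum (by fun_prop), hsum (by fun_prop), ← lintegral_const_mul _ (by fun_prop),
    ← lintegral_add_left (by fun_prop)]
  exact lintegral_congr fun x ↦ sum_mul_klPersp w (fun i ↦ f i x) (g x)

lemma lowerSemicontinuousAt_klDiv_mixture (ν : Measure X) [IsFiniteMeasure ν]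
    [∀ i, IsFiniteMeasure (μ i)] (hw : ∑ i, w i ≠ 0) :
    LowerSemicontinuousAt (fun w ↦ klDiv ν (mixture w μ)) w := by
  have hmix (w : ι → ℝ≥0) : IsFiniteMeasure (mixture w μ) := inferInstance
  obtain ⟨ρ, g, f, hg, hf, rfl, rfl⟩ := exists_common_withDensity ν μ
  simp only [mixture_withDensity _ hf] at hmix ⊢
  have hz (w : ι → ℝ≥0) : Measurable fun x ↦ (∑ i, w i)⁻¹ * ∑ i, w i * f i x := by fun_prop
  simp only [klDiv_withDensity, hg, hz]
  have hcont (x : X) : ContinuousAt (fun w : ι → ℝ≥0 ↦ (∑ i, w i)⁻¹ * ∑ i, w i * f i x) w :=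
    (ContinuousAt.inv₀ (by fun_prop) hw).mul
      (continuous_finsetSum _ fun i _ ↦ by fun_prop).continuousAt
  rw [lowerSemicontinuousAt_iff_le_liminf]
  calc ∫⁻ x, klPersp (g x) ((∑ i, w i)⁻¹ * ∑ i, w i * f i x) ∂ρ
    _ ≤ ∫⁻ x, liminf (fun w' : ι → ℝ≥0 ↦
          klPersp (g x) ((∑ i, w' i)⁻¹ * ∑ i, w' i * f i x)) (𝓝 w) ∂ρ :=
        lintegral_mono fun x ↦ LowerSemicontinuousAt.le_liminf
          ((lowerSemicontinuous_klPersp_right (g x) _).comp (hcont x))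
    _ ≤ _ := lintegral_liminf_le fun w' ↦ by fun_prop

lemma le_smul_mixture (w : ι → ℝ≥0) (μ : ι → Measure X) {i : ι} (hi : w i ≠ 0) :
    μ i ≤ ((w i)⁻¹ * ∑ j, w j) • mixture w μ := by
  have hW : ∑ j, w j ≠ 0 := fun h ↦ hi (Finset.sum_eq_zero_iff.1 h i (Finset.mem_univ i))
  calc μ i
    _ = (w i)⁻¹ • w i • μ i := (inv_smul_smul₀ hi _).symm
    _ ≤ (w i)⁻¹ • ∑ j, w j • μ j := by
      gcongr
      exact Finset.single_le_sum (f := fun j ↦ w j • μ j) (fun _ _ ↦ Measure.zero_le _)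
        (Finset.mem_univ i)
    _ = ((w i)⁻¹ * ∑ j, w j) • mixture w μ := by rw [mixture, mul_smul, smul_inv_smul₀ hW]

lemma klDiv_ne_top_of_le_smul {μ ν : Measure X} [IsFiniteMeasure μ] [IsFiniteMeasure ν] {c : ℝ≥0}
    (h : μ ≤ c • ν) : klDiv μ ν ≠ ∞ := by
  have hac : μ ≪ ν := (Measure.absolutelyContinuous_of_le h).trans
    (Measure.smul_absolutelyContinuous)
  have hle : μ.rnDeriv ν ≤ᵐ[ν] fun _ ↦ (c : ℝ≥0∞) := by
    refine ae_le_of_forall_setLIntegral_le_of_sigmaFinite (μ.measurable_rnDeriv ν) fun s _ _ ↦ ?_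
    calc ∫⁻ x in s, μ.rnDeriv ν x ∂ν
      _ ≤ μ s := Measure.setLIntegral_rnDeriv_le s
      _ ≤ (c • ν) s := h s
      _ = ∫⁻ _ in s, c ∂ν := (setLIntegral_const s c).symm
  obtain ⟨C, hC⟩ := (isCompact_Icc (a := 0) (b := (c : ℝ))).bddAbove_image
    continuous_klFun.continuousOn
  rw [klDiv_eq_lintegral_klFun_of_ac hac]
  refine ne_top_of_le_ne_top (b := ENNReal.ofReal C * ν Set.univ) (by finiteness) ?_
  rw [← lintegral_const]
  refine lintegral_mono_ae ?_
  filter_upwards [hle] with x hx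
  exact ENNReal.ofReal_le_ofReal (hC ⟨_, ⟨ENNReal.toReal_nonneg,
    ENNReal.toReal_le_coe_of_le_coe hx⟩, rfl⟩)

lemma jsDiv_ne_top (w : ι → ℝ≥0) (μ : ι → Measure X) [∀ i, IsFiniteMeasure (μ i)] :
    jsDiv w μ ≠ ∞ := by
  refine ENNReal.sum_ne_top.2 fun i _ ↦ ?_
  rcases eq_or_ne (w i) 0 with hi | hi
  · simp [hi]
  · exact ENNReal.mul_ne_top ENNReal.coe_ne_top (klDiv_ne_top_of_le_smul (le_smul_mixture w μ hi))

lemma jsDiv_add_mul_klDiv_le [DecidableEq ι] (w : ι → ℝ≥0) (μ : ι → Measure X)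
    [∀ i, IsFiniteMeasure (μ i)] (j : ι) (t : ℝ≥0) :
    jsDiv w μ + t * klDiv (μ j) (mixture (w + Pi.single j t) μ) ≤ jsDiv (w + Pi.single j t) μ := by
  set M := mixture (w + Pi.single j t) μ with hM
  calc jsDiv w μ + t * klDiv (μ j) M
    _ ≤ ∑ i, w i * klDiv (μ i) M + t * klDiv (μ j) M := by
      rw [sum_mul_klDiv w μ M]
      gcongr
      exact le_add_self
    _ = jsDiv (w + Pi.single j t) μ := by
      simp [jsDiv, ← hM, add_mul, Finset.sum_add_distrib, Pi.single_apply,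
        apply_ite ENNReal.ofNNReal]

lemma klDiv_mixture_le_of_forall_add_single [DecidableEq ι] {ν : Measure X} [IsFiniteMeasure ν]
    [∀ i, IsFiniteMeasure (μ i)] (hw : ∑ i, w i ≠ 0) (j : ι) {B : ℝ≥0∞}
    (h : ∀ t ≠ 0, klDiv ν (mixture (w + Pi.single j t) μ) ≤ B) : klDiv ν (mixture w μ) ≤ B := by
  by_contra! hlt
  have hcont : Tendsto (fun t : ℝ≥0 ↦ w + Pi.single j t) (𝓝[>] 0) (𝓝 w) :=
    ((continuous_const.add (continuous_single j)).tendsto' 0 w (by simp)).mono_left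
      nhdsWithin_le_nhds
  obtain ⟨t, hBt, ht⟩ := ((hcont.eventually
    (lowerSemicontinuousAt_klDiv_mixture ν hw B hlt)).and self_mem_nhdsWithin).exists
  exact (h t ht.ne').not_gt hBt

lemma klDiv_mixture_le_of_jsDiv_add_single_le [DecidableEq ι] [∀ i, IsFiniteMeasure (μ i)]
    (hw : ∑ i, w i ≠ 0) (j : ι) {c : ℝ}
    (h : ∀ t, (jsDiv (w + Pi.single j t) μ).toReal ≤ (jsDiv w μ).toReal + t * c) :
    (klDiv (μ j) (mixture w μ) : EReal) ≤ c := by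
  have hc (t : ℝ≥0) (ht : t ≠ 0) :
      klDiv (μ j) (mixture (w + Pi.single j t) μ) ≠ ∞ ∧
        (klDiv (μ j) (mixture (w + Pi.single j t) μ)).toReal ≤ c := by
    have hadd := jsDiv_add_mul_klDiv_le w μ j t
    have hmul : (t : ℝ≥0∞) * klDiv (μ j) (mixture (w + Pi.single j t) μ) ≠ ∞ :=
      ne_top_of_le_ne_top (jsDiv_ne_top _ μ) (le_add_self.trans hadd)
    refine ⟨fun htop ↦ ?_, ?_⟩
    · rw [htop, ENNReal.mul_top (by exact_mod_cast ht)] at hmul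
      exact hmul rfl
    · have hreal := ENNReal.toReal_mono (jsDiv_ne_top _ μ) hadd
      rw [ENNReal.toReal_add (jsDiv_ne_top w μ) hmul, ENNReal.toReal_mul,
        ENNReal.coe_toReal] at hreal
      have := hreal.trans (h t)
      refine le_of_mul_le_mul_left (a := (t : ℝ)) (by linarith) ?_
      positivity
  have hc₀ : 0 ≤ c := ENNReal.toReal_nonneg.trans (hc 1 one_ne_zero).2
  have hle : klDiv (μ j) (mixture w μ) ≤ ENNReal.ofReal c :=
    klDiv_mixture_le_of_forall_add_single hw j fun t ht ↦
      (ENNReal.le_ofReal_iff_toReal_le (hc t ht).1 hc₀).2 (hc t ht).2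
  calc (klDiv (μ j) (mixture w μ) : EReal)
    _ ≤ (ENNReal.ofReal c : EReal) := EReal.coe_ennreal_le_coe_ennreal_iff.2 hle
    _ = c := by rw [EReal.coe_ennreal_ofReal, max_eq_left hc₀]

end mixture

lemma sum_coe_mul_coe_sub_coe {ι : Type*} (s : Finset ι) (l : ι → ℝ≥0) (k : ι → ℝ≥0∞) (b : ι → ℝ) :
    ∑ i ∈ s, ((l i : ℝ) : EReal) * ((k i : EReal) - (b i : EReal)) =
      ((∑ i ∈ s, l i * k i : ℝ≥0∞) : EReal) - ((∑ i ∈ s, l i * b i : ℝ) : EReal) := by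
  classical
  induction s using Finset.induction_on with
  | empty => simp
  | insert i s hi ih =>
    rw [Finset.sum_insert hi, Finset.sum_insert hi, Finset.sum_insert hi, ih,
      EReal.mul_sub_of_nonneg_of_ne_top (by positivity) (EReal.coe_ne_top _),
      ← EReal.coe_mul, ← EReal.coe_nnreal_eq_coe_real, ← EReal.coe_ennreal_mul,
      EReal.coe_ennreal_add, sub_eq_add_neg, sub_eq_add_neg, sub_eq_add_neg, add_add_add_comm,
      ← EReal.coe_neg, ← EReal.coe_neg, ← EReal.coe_neg, ← EReal.coe_add, neg_add]

section duality

variable {X : Type*} [MeasurableSpace X] {m : ℕ}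

lemma KL_eq_klDiv (μ ν : Measure X) [IsProbabilityMeasure μ] [IsProbabilityMeasure ν] :
    KL μ ν = klDiv μ ν := by
  by_cases h : μ ≪ ν ∧ Integrable (llr μ ν) μ
  · rw [KL, if_pos h, ← toReal_klDiv_of_measure_eq h.1 (by simp),
      EReal.coe_ennreal_toReal (klDiv_ne_top h.1 h.2)]
  · rw [KL, if_neg h, klDiv, if_neg h, EReal.coe_ennreal_top]

lemma qMix_eq_mixture (q : Measure X) (qi : Fin m → Measure X) (l : Fin m → ℝ≥0) :
    qMix q qi (fun i ↦ l i) = mixture (vecCons 1 l) (vecCons q qi) := by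
  have hW : (ENNReal.ofReal (1 + ∑ i, (l i : ℝ)))⁻¹ = ((1 + ∑ i, l i)⁻¹ : ℝ≥0) := by
    rw [ENNReal.coe_inv (by positivity), ← ENNReal.ofReal_coe_nnreal]
    push_cast
    rfl
  simp only [qMix, mixture, hW, ENNReal.ofReal_coe_nnreal, Fin.sum_univ_succ, cons_val_zero,
    cons_val_succ, one_smul]
  rfl

lemma sum_vecCons_one_ne_zero (l : Fin m → ℝ≥0) : ∑ i, vecCons 1 l i ≠ 0 := by
  simp [Fin.sum_univ_succ]

variable (q : Measure X) [IsProbabilityMeasure q] (qi : Fin m → Measure X)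
  [hqi : ∀ i, IsProbabilityMeasure (qi i)]

instance isProbabilityMeasure_vecCons (i : Fin (m + 1)) :
    IsProbabilityMeasure (vecCons q qi i) := by
  cases i using Fin.cases with
  | zero => assumption
  | succ i => exact hqi i

lemma lagrangian_eq (b : Fin m → ℝ) (l : Fin m → ℝ≥0) (p : Measure X) [IsProbabilityMeasure p] :
    KL q p + ∑ i, ((l i : ℝ) : EReal) * (KL (qi i) p - (b i : EReal)) =
      ((∑ i, vecCons 1 l i : ℝ≥0) * klDiv (mixture (vecCons 1 l) (vecCons q qi)) p +
        jsDiv (vecCons 1 l) (vecCons q qi) : ℝ≥0∞) - ((∑ i, l i * b i : ℝ) : EReal) := by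
  rw [← sum_mul_klDiv]
  simp only [KL_eq_klDiv, sum_coe_mul_coe_sub_coe]
  simp only [Fin.sum_univ_succ, cons_val_zero, cons_val_succ, ENNReal.coe_one, one_mul,
    EReal.coe_ennreal_add, sub_eq_add_neg, add_assoc]

lemma dualFn_eq (b : Fin m → ℝ) (l : Fin m → ℝ≥0) :
    dualFn q qi b (fun i ↦ l i) =
      ((jsDiv (vecCons 1 l) (vecCons q qi)).toReal - ∑ i, l i * b i : ℝ) := by
  set M := mixture (vecCons 1 l) (vecCons q qi) with hM
  have hMprob : IsProbabilityMeasure M := isProbabilityMeasure_mixture (sum_vecCons_one_ne_zero l)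
  rw [EReal.coe_sub, EReal.coe_ennreal_toReal (jsDiv_ne_top _ _)]
  refine le_antisymm (iInf_le_of_le ⟨M, hMprob⟩ ?_) (le_iInf fun ⟨p, hp⟩ ↦ ?_)
  · rw [lagrangian_eq, ← hM, klDiv_self, mul_zero, zero_add]
  · rw [lagrangian_eq]
    exact EReal.sub_le_sub (EReal.coe_ennreal_le_coe_ennreal_iff.2 le_add_self) le_rfl

lemma lagrangian_eq_add_dualFn (b : Fin m → ℝ) (l : Fin m → ℝ≥0) (p : Measure X)
    [IsProbabilityMeasure p] :
    KL q p + ∑ i, ((l i : ℝ) : EReal) * (KL (qi i) p - (b i : EReal)) =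
      ((∑ i, vecCons 1 l i : ℝ≥0) * klDiv (mixture (vecCons 1 l) (vecCons q qi)) p : ℝ≥0∞) +
        dualFn q qi b (fun i ↦ l i) := by
  rw [lagrangian_eq, dualFn_eq, EReal.coe_ennreal_add, EReal.coe_sub,
    EReal.coe_ennreal_toReal (jsDiv_ne_top _ _), sub_eq_add_neg, sub_eq_add_neg, add_assoc]

variable {q qi} {b : Fin m → ℝ} {l : Fin m → ℝ≥0}

lemma klDiv_constraint_mixture_le
    (hmax : ∀ l' : Fin m → ℝ≥0, dualFn q qi b (fun i ↦ l' i) ≤ dualFn q qi b (fun i ↦ l i))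
    (i : Fin m) : (klDiv (qi i) (mixture (vecCons 1 l) (vecCons q qi)) : EReal) ≤ b i := by
  refine klDiv_mixture_le_of_jsDiv_add_single_le (μ := vecCons q qi)
    (sum_vecCons_one_ne_zero l) i.succ fun t ↦ ?_
  have hadd : vecCons 1 l + Pi.single i.succ t = vecCons 1 (l + Pi.single i t) := by
    ext j
    cases j using Fin.cases <;> simp [Pi.single_apply]
  have h := hmax (l + Pi.single i t)
  rw [dualFn_eq, dualFn_eq, EReal.coe_le_coe_iff] at h
  have hsum : ∑ j, (((l + Pi.single i t : Fin m → ℝ≥0) j : ℝ) * b j) =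
      ∑ j, (l j * b j : ℝ) + t * b i := by
    simp [add_mul, Finset.sum_add_distrib, Pi.single_apply, apply_ite NNReal.toReal]
  rw [hadd]
  linarith

lemma klDiv_objective_mixture_le
    (hmax : ∀ l' : Fin m → ℝ≥0, dualFn q qi b (fun i ↦ l' i) ≤ dualFn q qi b (fun i ↦ l i)) :
    (klDiv q (mixture (vecCons 1 l) (vecCons q qi)) : EReal) ≤ dualFn q qi b (fun i ↦ l i) := by
  rw [dualFn_eq]
  refine klDiv_mixture_le_of_jsDiv_add_single_le (μ := vecCons q qi)
    (sum_vecCons_one_ne_zero l) 0 fun t ↦ ?_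
  have ht : 1 + t ≠ 0 := by positivity
  have hadd : vecCons 1 l + Pi.single 0 t = (1 + t) • vecCons 1 ((1 + t)⁻¹ • l) := by
    rw [smul_cons, smul_inv_smul₀ ht]
    ext j
    cases j using Fin.cases <;> simp
  have h := hmax ((1 + t)⁻¹ • l)
  rw [dualFn_eq, dualFn_eq, EReal.coe_le_coe_iff] at h
  have hsum : (1 + t : ℝ) * ∑ j, (((1 + t)⁻¹ • l) j * b j : ℝ) = ∑ j, (l j * b j : ℝ) := by
    have ht' : (1 + t : ℝ) ≠ 0 := by positivity
    simp [Finset.mul_sum, ← mul_assoc, mul_inv_cancel₀ ht']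
  rw [hadd, jsDiv_smul ht, ENNReal.toReal_mul, ENNReal.coe_toReal, NNReal.coe_add, NNReal.coe_one]
  linarith [mul_le_mul_of_nonneg_left h (by positivity : (0 : ℝ) ≤ 1 + t)]

lemma klDiv_mixture_add_le
    (hmax : ∀ l' : Fin m → ℝ≥0, dualFn q qi b (fun i ↦ l' i) ≤ dualFn q qi b (fun i ↦ l i))
    {p : Measure X} [IsProbabilityMeasure p] (hp : ∀ i, KL (qi i) p ≤ b i) :
    klDiv q (mixture (vecCons 1 l) (vecCons q qi)) +
      (∑ i, vecCons 1 l i : ℝ≥0) * klDiv (mixture (vecCons 1 l) (vecCons q qi)) p ≤ klDiv q p := by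
  have hpenalty : ∑ i, ((l i : ℝ) : EReal) * (KL (qi i) p - (b i : EReal)) ≤ 0 :=
    Finset.sum_nonpos fun i _ ↦
      mul_nonpos_of_nonneg_of_nonpos (by positivity) (EReal.sub_nonpos.2 (hp i))
  rw [← EReal.coe_ennreal_le_coe_ennreal_iff, EReal.coe_ennreal_add, add_comm]
  calc _
    _ ≤ _ + dualFn q qi b (fun i ↦ l i) := by gcongr; exact klDiv_objective_mixture_le hmax
    _ = KL q p + ∑ i, ((l i : ℝ) : EReal) * (KL (qi i) p - (b i : EReal)) :=
      (lagrangian_eq_add_dualFn q qi b l p).symm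
    _ ≤ KL q p := by simpa using add_le_add_right hpenalty (KL q p)
    _ = klDiv q p := KL_eq_klDiv q p

lemma setOf_minimizer_KL_eq_singleton (M : Measure X) [IsProbabilityMeasure M] :
    {p : Measure X | IsProbabilityMeasure p ∧
      ∀ p' : Measure X, IsProbabilityMeasure p' → KL M p ≤ KL M p'} = {M} := by
  ext p
  refine ⟨fun ⟨hp, hmin⟩ ↦ ?_, ?_⟩
  · have h := hmin M inferInstance
    rw [KL_eq_klDiv, KL_eq_klDiv, klDiv_self, EReal.coe_ennreal_le_coe_ennreal_iff,
      nonpos_iff_eq_zero, klDiv_eq_zero_iff] at h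
    exact h.symm
  · rintro rfl
    refine ⟨inferInstance, fun p' hp' ↦ ?_⟩
    rw [KL_eq_klDiv, KL_eq_klDiv, klDiv_self, EReal.coe_ennreal_zero]
    exact EReal.coe_ennreal_nonneg _

lemma setOf_feasible_minimizer_KL_eq_singleton
    (hmax : ∀ l' : Fin m → ℝ≥0, dualFn q qi b (fun i ↦ l' i) ≤ dualFn q qi b (fun i ↦ l i)) :
    {p : Measure X | IsProbabilityMeasure p ∧ (∀ i, KL (qi i) p ≤ (b i : EReal)) ∧
      ∀ p' : Measure X, IsProbabilityMeasure p' → (∀ i, KL (qi i) p' ≤ (b i : EReal)) →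
        KL q p ≤ KL q p'} = {mixture (vecCons 1 l) (vecCons q qi)} := by
  set M := mixture (vecCons 1 l) (vecCons q qi)
  have hM : IsProbabilityMeasure M := isProbabilityMeasure_mixture (sum_vecCons_one_ne_zero l)
  have hfeas i : KL (qi i) M ≤ b i := by
    rw [KL_eq_klDiv]
    exact klDiv_constraint_mixture_le hmax i
  ext p
  refine ⟨fun ⟨hp, hpfeas, hmin⟩ ↦ ?_, ?_⟩
  · have hle := hmin M hM hfeas
    rw [KL_eq_klDiv, KL_eq_klDiv, EReal.coe_ennreal_le_coe_ennreal_iff] at hle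
    have hfin : klDiv q M ≠ ∞ :=
      klDiv_ne_top_of_le_smul (le_smul_mixture (vecCons 1 l) (vecCons q qi) (i := 0) one_ne_zero)
    have hzero : (∑ i, vecCons 1 l i : ℝ≥0) * klDiv M p = 0 := by
      rw [← nonpos_iff_eq_zero, ← ENNReal.add_le_add_iff_left hfin, add_zero]
      exact (klDiv_mixture_add_le hmax hpfeas).trans hle
    have hW : ((∑ i, vecCons 1 l i : ℝ≥0) : ℝ≥0∞) ≠ 0 :=
      ENNReal.coe_ne_zero.2 (sum_vecCons_one_ne_zero l)
    exact (klDiv_eq_zero_iff.1 ((mul_eq_zero.1 hzero).resolve_left hW)).symm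
  · rintro rfl
    refine ⟨hM, hfeas, fun p' hp' hp'feas ↦ ?_⟩
    rw [KL_eq_klDiv, KL_eq_klDiv, EReal.coe_ennreal_le_coe_ennreal_iff]
    exact le_self_add.trans (klDiv_mixture_add_le hmax hp'feas)

end duality

theorem stmt2_general {X : Type*} [MeasurableSpace X] {m : ℕ}
    (q : Measure X) [IsProbabilityMeasure q]
    (qi : Fin m → Measure X) (hqi : ∀ i, IsProbabilityMeasure (qi i))
    (b : Fin m → ℝ)
    (lstar : Fin m → ℝ) (hlstar : ∀ i, 0 ≤ lstar i)
    (hmax : ∀ l : Fin m → ℝ, (∀ i, 0 ≤ l i) → dualFn q qi b l ≤ dualFn q qi b lstar) :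
    {p : Measure X | IsProbabilityMeasure p ∧ (∀ i, KL (qi i) p ≤ (b i : EReal)) ∧
        ∀ p' : Measure X, IsProbabilityMeasure p' → (∀ i, KL (qi i) p' ≤ (b i : EReal)) →
          KL q p ≤ KL q p'}
      = {p : Measure X | IsProbabilityMeasure p ∧
          ∀ p' : Measure X, IsProbabilityMeasure p' →
            KL (qMix q qi lstar) p ≤ KL (qMix q qi lstar) p'} := by
  lift lstar to Fin m → ℝ≥0 using hlstar
  have : IsProbabilityMeasure (mixture (vecCons 1 lstar) (vecCons q qi)) :=
    isProbabilityMeasure_mixture (sum_vecCons_one_ne_zero lstar)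
  rw [qMix_eq_mixture, setOf_minimizer_KL_eq_singleton,
    setOf_feasible_minimizer_KL_eq_singleton fun l ↦ hmax _ fun i ↦ (l i).coe_nonneg]

/-- under the Slater condition, if `λ*` maximizes the dual function over
`ℝ₊ᵐ`, then the set of optimal solutions of the constrained problem
`min KL(q‖p) s.t. KL(qⁱ‖p) ≤ bᵢ` coincides with the set of minimizers of
`p ↦ KL(q_mix^{(λ*)}‖p)` over all probability measures `p`. -/
theorem stmt2 {X : Type*} [MeasurableSpace X] {m : ℕ}
    (q : Measure X) [IsProbabilityMeasure q]
    (qi : Fin m → Measure X) (hqi : ∀ i, IsProbabilityMeasure (qi i))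
    (b : Fin m → ℝ)
    (hSlater : ∃ phat : Measure X, IsProbabilityMeasure phat ∧
      ∃ ζ : ℝ, 0 < ζ ∧ ∀ i, KL (qi i) phat ≤ ((b i - ζ : ℝ) : EReal))
    (lstar : Fin m → ℝ) (hlstar : ∀ i, 0 ≤ lstar i)
    (hmax : ∀ l : Fin m → ℝ, (∀ i, 0 ≤ l i) → dualFn q qi b l ≤ dualFn q qi b lstar) :
    {p : Measure X | IsProbabilityMeasure p ∧ (∀ i, KL (qi i) p ≤ (b i : EReal)) ∧
        ∀ p' : Measure X, IsProbabilityMeasure p' → (∀ i, KL (qi i) p' ≤ (b i : EReal)) →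
          KL q p ≤ KL q p'}
      = {p : Measure X | IsProbabilityMeasure p ∧
          ∀ p' : Measure X, IsProbabilityMeasure p' →
            KL (qMix q qi lstar) p ≤ KL (qMix q qi lstar) p'} := by
  exact stmt2_general q qi hqi b lstar hlstar hmax
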